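/- arXiv:2011.11029 — 3 statements merged into one kernel-verified Lean document; each statement's English description precedes it below -/
import Mathlib

section
/- Let S = (X, U, ⇝) be a discrete-time control system with cost function c. If V is a Bellman-like value function of S with cost function c, then the Q-function Q_{c,V} is a Bellman-like Q-function of S with cost function c; that is, Q_{c,V}(x, (u_1, …, u_k)) ≤ Q_{c,V}(x, (u_1, …, u_l)) for all k ≤ l, all x ∈ X and all input tuples (u_1, …, u_l) ∈ U^l. -/
/-!
A Q-value along a concatenation `us ++ vs` is the Q-value along `us` whose terminal values are the
Q-values along `vs`. As Q-values are monotone in the terminal value function, it suffices that a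
Bellman-like `V` lies below its Q-value along every tuple; this follows by induction, since the
Bellman inequality bounds `V` by its one-step Q-values.
-/

/-- The Q-function `Q_{c,V}` of a discrete-time control system `(X, U, ⇝)` with
transition relation `tr`, cost function `c` and terminal value function `V`. -/
noncomputable def QcV {X U : Type*} (tr : X → U → X → Prop) (c : X → U → ℝ)
    (V : X → EReal) : X → List U → EReal
  | x, [] => V x
  | x, u :: us => (c x u : EReal) + ⨆ x' ∈ {y | tr x u y}, QcV tr c V x' us

/-- The Bellman operator `T_c V (x) = inf_{u ∈ U} Q_{c,V}(x, u)`. -/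
noncomputable def bellman {X U : Type*} (tr : X → U → X → Prop) (c : X → U → ℝ)
    (V : X → EReal) : X → EReal :=
  fun x => ⨅ u : U, QcV tr c V x [u]

/-- `V` is a Bellman-like value function: `V x ≤ T_c V x` for all `x`. -/
def IsBellmanLike {X U : Type*} (tr : X → U → X → Prop) (c : X → U → ℝ)
    (V : X → EReal) : Prop :=
  ∀ x, V x ≤ bellman tr c V x

section

variable {X U : Type*} {tr : X → U → X → Prop} {c : X → U → ℝ} {V W : X → EReal}

theorem QcV_append (x : X) (us vs : List U) :
    QcV tr c V x (us ++ vs) = QcV tr c (fun y => QcV tr c V y vs) x us := by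
  induction us generalizing x with
  | nil => rfl
  | cons u us ih => simp only [List.cons_append, QcV, ih]

theorem QcV_mono (hVW : ∀ x, V x ≤ W x) (x : X) (us : List U) :
    QcV tr c V x us ≤ QcV tr c W x us := by
  induction us generalizing x with
  | nil => exact hVW x
  | cons u us ih => exact add_le_add_right (iSup₂_mono fun y _ => ih y) (c x u : EReal)

theorem IsBellmanLike.le_QcV_singleton (hV : IsBellmanLike tr c V) (x : X) (u : U) :
    V x ≤ QcV tr c V x [u] :=
  (hV x).trans (iInf_le _ u)

theorem IsBellmanLike.le_QcV (hV : IsBellmanLike tr c V) (x : X) (us : List U) :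
    V x ≤ QcV tr c V x us := by
  induction us generalizing x with
  | nil => exact le_rfl
  | cons u us ih =>
    calc
      V x ≤ QcV tr c V x [u] := hV.le_QcV_singleton x u
      _ ≤ QcV tr c (fun y => QcV tr c V y us) x [u] := QcV_mono ih x [u]
      _ = QcV tr c V x (u :: us) := (QcV_append x [u] us).symm

end

/-- If `V` is a Bellman-like value function of `S` with cost `c`, then `Q_{c,V}` is a
Bellman-like Q-function of `S` with cost `c`: for all `k ≤ l`, all states `x` and all
input tuples `(u₁, …, u_l)`, `Q_{c,V}(x, (u₁, …, u_k)) ≤ Q_{c,V}(x, (u₁, …, u_l))`. -/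
theorem QcV_isBellmanLikeQ {X U : Type*} (tr : X → U → X → Prop) (c : X → U → ℝ)
    (V : X → EReal) (hV : IsBellmanLike tr c V) :
    ∀ (x : X) (us : List U) (k : ℕ), k ≤ us.length →
      QcV tr c V x (us.take k) ≤ QcV tr c V x us := by
  intro x us k _
  calc
    QcV tr c V x (us.take k)
      ≤ QcV tr c (fun y => QcV tr c V y (us.drop k)) x (us.take k) :=
        QcV_mono (fun y => hV.le_QcV y (us.drop k)) x (us.take k)
    _ = QcV tr c V x (us.take k ++ us.drop k) := (QcV_append x (us.take k) (us.drop k)).symm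
    _ = QcV tr c V x us := by rw [List.take_append_drop]
end

section
/- Let S_1 = (X_1, U_1, ⇝_1) and S_2 = (X_2, U_2, ⇝_2) be discrete-time control systems and let R ⊆ X_1 × X_2 be an alternating simulation relation such that for each x_1 ∈ X_1 there is exactly one x_2 ∈ X_2 with (x_1, x_2) ∈ R, denoted R(x_1). Let c_1 be a cost function for S_1 and let c_2 be a cost function for S_2 satisfying c_2(x_2, u_2) ≤ c_1(x_1, u_1) for all (x_1, x_2, u_1, u_2) in the extended relation R^e. If V_2 is a Bellman-like value function for S_2 with cost function c_2, then V_1 defined by V_1(x_1) = V_2(R(x_1)) is a Bellman-like value function for S_1 with cost function c_1. -/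
/-- The extended relation `R^e`: `(x₁, x₂, u₁, u₂) ∈ R^e` iff for every
`x₂' ∈ Post_{2,u₂}(x₂)` there exists `x₁' ∈ Post_{1,u₁}(x₁)` with `(x₁', x₂') ∈ R`. -/
def ExtRel {X₁ U₁ X₂ U₂ : Type*} (tr₁ : X₁ → U₁ → X₁ → Prop) (tr₂ : X₂ → U₂ → X₂ → Prop)
    (R : X₁ → X₂ → Prop) (x₁ : X₁) (x₂ : X₂) (u₁ : U₁) (u₂ : U₂) : Prop :=
  ∀ x₂', tr₂ x₂ u₂ x₂' → ∃ x₁', tr₁ x₁ u₁ x₁' ∧ R x₁' x₂'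

/-- `R` is an alternating simulation relation: for all `(x₁, x₂) ∈ R` and all `u₁`
there exists `u₂` with `(x₁, x₂, u₁, u₂) ∈ R^e`. -/
def IsAltSim {X₁ U₁ X₂ U₂ : Type*} (tr₁ : X₁ → U₁ → X₁ → Prop) (tr₂ : X₂ → U₂ → X₂ → Prop)
    (R : X₁ → X₂ → Prop) : Prop :=
  ∀ x₁ x₂, R x₁ x₂ → ∀ u₁ : U₁, ∃ u₂ : U₂, ExtRel tr₁ tr₂ R x₁ x₂ u₁ u₂

/-!
The Bellman operator is monotone along an alternating simulation: the adversary of `S₁` can answer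
`u₁` by imitating each successor that the adversary of `S₂` picks after the simulating input `u₂`,
which costs no more than `u₁`, so if `V₂ ≤ V₁` on `R` then `T_{c₂} V₂ ≤ T_{c₁} V₁` on `R`. The least
`V₁` with `V₂ ≤ V₁` on `R` is the supremum of `V₂` over related states, which therefore inherits the
Bellman inequality and, when `R` is the graph of `f`, equals `V₂ ∘ f`.
-/

section AlternatingSimulation

theorem QcV_singleton {X U : Type*} (tr : X → U → X → Prop) (c : X → U → ℝ) (V : X → EReal)
    (x : X) (u : U) :
    QcV tr c V x [u] = (c x u : EReal) + ⨆ (x' : X) (_ : tr x u x'), V x' :=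
  rfl

variable {X₁ U₁ X₂ U₂ : Type*} {tr₁ : X₁ → U₁ → X₁ → Prop} {tr₂ : X₂ → U₂ → X₂ → Prop}
  {R : X₁ → X₂ → Prop} {x₁ : X₁} {x₂ : X₂} {u₁ : U₁} {u₂ : U₂}

theorem ExtRel.iSup_post_le_iSup_post {α : Type*} [CompleteLattice α] {V₁ : X₁ → α} {V₂ : X₂ → α}
    (hu : ExtRel tr₁ tr₂ R x₁ x₂ u₁ u₂) (hV : ∀ x₁ x₂, R x₁ x₂ → V₂ x₂ ≤ V₁ x₁) :
    ⨆ (x₂' : X₂) (_ : tr₂ x₂ u₂ x₂'), V₂ x₂' ≤ ⨆ (x₁' : X₁) (_ : tr₁ x₁ u₁ x₁'), V₁ x₁' :=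
  iSup₂_mono' fun x₂' hx₂' =>
    let ⟨x₁', hx₁', hR⟩ := hu x₂' hx₂'
    ⟨x₁', hx₁', hV x₁' x₂' hR⟩

variable {c₁ : X₁ → U₁ → ℝ} {c₂ : X₂ → U₂ → ℝ} {V₁ : X₁ → EReal} {V₂ : X₂ → EReal}

theorem ExtRel.QcV_singleton_le_QcV_singleton (hu : ExtRel tr₁ tr₂ R x₁ x₂ u₁ u₂)
    (hc : c₂ x₂ u₂ ≤ c₁ x₁ u₁) (hV : ∀ x₁ x₂, R x₁ x₂ → V₂ x₂ ≤ V₁ x₁) :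
    QcV tr₂ c₂ V₂ x₂ [u₂] ≤ QcV tr₁ c₁ V₁ x₁ [u₁] := by
  rw [QcV_singleton, QcV_singleton]
  exact add_le_add (EReal.coe_le_coe hc) (hu.iSup_post_le_iSup_post hV)

theorem bellman_le_bellman_of_extRel
    (hsim : ∀ u₁, ∃ u₂, ExtRel tr₁ tr₂ R x₁ x₂ u₁ u₂ ∧ c₂ x₂ u₂ ≤ c₁ x₁ u₁)
    (hV : ∀ x₁ x₂, R x₁ x₂ → V₂ x₂ ≤ V₁ x₁) :
    bellman tr₂ c₂ V₂ x₂ ≤ bellman tr₁ c₁ V₁ x₁ :=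
  iInf_mono' fun u₁ =>
    let ⟨u₂, hu, hc⟩ := hsim u₁
    ⟨u₂, hu.QcV_singleton_le_QcV_singleton hc hV⟩

theorem bellmanLike_of_altSim_general
    (hsim : ∀ x₁ x₂, R x₁ x₂ →
      ∀ u₁, ∃ u₂, ExtRel tr₁ tr₂ R x₁ x₂ u₁ u₂ ∧ c₂ x₂ u₂ ≤ c₁ x₁ u₁)
    (hV₂ : IsBellmanLike tr₂ c₂ V₂) :
    IsBellmanLike tr₁ c₁ (fun x₁ => ⨆ (x₂ : X₂) (_ : R x₁ x₂), V₂ x₂) := by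
  refine fun x₁ => iSup₂_le fun x₂ hR => ?_
  calc
    V₂ x₂ ≤ bellman tr₂ c₂ V₂ x₂ := hV₂ x₂
    _ ≤ bellman tr₁ c₁ (fun x₁ => ⨆ (x₂ : X₂) (_ : R x₁ x₂), V₂ x₂) x₁ :=
      bellman_le_bellman_of_extRel (hsim x₁ x₂ hR) fun _ y hy => le_iSup₂_of_le y hy le_rfl

end AlternatingSimulation

/-- If `R` is an alternating simulation relation relating each `x₁` to exactly one
`x₂ = f x₁`, the costs satisfy `c₂(x₂, u₂) ≤ c₁(x₁, u₁)` on `R^e`, and `V₂` is a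
Bellman-like value function for `S₂` with cost `c₂`, then `V₁ = V₂ ∘ f` is a Bellman-like
value function for `S₁` with cost `c₁`. -/
theorem bellmanLike_of_altSim {X₁ U₁ X₂ U₂ : Type*}
    (tr₁ : X₁ → U₁ → X₁ → Prop) (tr₂ : X₂ → U₂ → X₂ → Prop)
    (c₁ : X₁ → U₁ → ℝ) (c₂ : X₂ → U₂ → ℝ)
    (R : X₁ → X₂ → Prop) (f : X₁ → X₂)
    (hAlt : IsAltSim tr₁ tr₂ R)
    (hfun : ∀ x₁ x₂, R x₁ x₂ ↔ x₂ = f x₁)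
    (hcost : ∀ x₁ x₂ u₁ u₂, ExtRel tr₁ tr₂ R x₁ x₂ u₁ u₂ → c₂ x₂ u₂ ≤ c₁ x₁ u₁)
    (V₂ : X₂ → EReal) (hV₂ : IsBellmanLike tr₂ c₂ V₂) :
    IsBellmanLike tr₁ c₁ (fun x₁ => V₂ (f x₁)) := by
  simpa only [hfun, iSup_iSup_eq_left] using bellmanLike_of_altSim_general
    (fun x₁ x₂ hR u₁ => (hAlt x₁ x₂ hR u₁).imp fun u₂ hu => ⟨hu, hcost x₁ x₂ u₁ u₂ hu⟩) hV₂
end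

section
/- Let S_1 = (X_1, U_1, ⇝_1) and S_2 = (X_2, U_2, ⇝_2) be discrete-time control systems and let R ⊆ X_1 × X_2 be an alternating simulation relation such that for each x_2 ∈ X_2 there is exactly one x_1 ∈ X_1 with (x_1, x_2) ∈ R, denoted R(x_2). Let c_2 be a cost function for S_2 and let c_1 be a cost function for S_1 satisfying c_1(x_1, u_1) ≥ c_2(x_2, u_2) for all (x_1, x_2, u_1, u_2) in the extended relation R^e. If L_1 is a Lyapunov function for S_1 with cost function c_1 in a set X_f ⊆ X_1, then L_2 defined by L_2(x_2) = L_1(R(x_2)) is a Lyapunov function for S_2 with cost function c_2 in the set {x_2 ∈ X_2 : R(x_2) ∈ X_f}. -/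
/-- `L` is a Lyapunov function with cost `c` for the system in `X_f`:
`L x = ∞` outside `X_f`, and `L x` is finite with `T_c L x ≤ L x` on `X_f`. -/
def IsLyapunov {X U : Type*} (tr : X → U → X → Prop) (c : X → U → ℝ)
    (Xf : Set X) (L : X → EReal) : Prop :=
  (∀ x ∉ Xf, L x = ⊤) ∧
    ∀ x ∈ Xf, (L x ≠ ⊤ ∧ L x ≠ ⊥) ∧ bellman tr c L x ≤ L x

/-! An answer `u₂` to `u₁` costs no more than `u₁` and leads only to states related to successors
under `u₁`, so its worst-case value is no larger. Hence `T_{c₂} V₂ x₂ ≤ T_{c₁} V₁ x₁` for related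
`x₁`, `x₂` as soon as `V₂` lies below `V₁` along `R`. The largest such `V₂` is the fibrewise infimum
of `V₁`, which is `V₁ ∘ g` when `R` is the graph of `g`. -/

theorem IsLyapunov.bellman_le {X U : Type*} {tr : X → U → X → Prop} {c : X → U → ℝ}
    {Xf : Set X} {L : X → EReal} (hL : IsLyapunov tr c Xf L) (x : X) :
    bellman tr c L x ≤ L x := by
  by_cases hx : x ∈ Xf
  · exact (hL.2 x hx).2
  · exact le_top.trans_eq (hL.1 x hx).symm

section Simulation

variable {X₁ U₁ X₂ U₂ : Type*} {tr₁ : X₁ → U₁ → X₁ → Prop} {tr₂ : X₂ → U₂ → X₂ → Prop}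
  {c₁ : X₁ → U₁ → ℝ} {c₂ : X₂ → U₂ → ℝ} {R : X₁ → X₂ → Prop}

theorem ExtRel.QcV_cons_le_QcV_cons {V₁ : X₁ → EReal} {V₂ : X₂ → EReal} {x₁ : X₁} {x₂ : X₂}
    {u₁ : U₁} {u₂ : U₂} {us₁ : List U₁} {us₂ : List U₂}
    (hExt : ExtRel tr₁ tr₂ R x₁ x₂ u₁ u₂) (hc : c₂ x₂ u₂ ≤ c₁ x₁ u₁)
    (hQ : ∀ x₁' x₂', R x₁' x₂' → QcV tr₂ c₂ V₂ x₂' us₂ ≤ QcV tr₁ c₁ V₁ x₁' us₁) :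
    QcV tr₂ c₂ V₂ x₂ (u₂ :: us₂) ≤ QcV tr₁ c₁ V₁ x₁ (u₁ :: us₁) := by
  rw [QcV, QcV]
  refine add_le_add (EReal.coe_le_coe_iff.2 hc) (iSup₂_le fun x₂' hx₂' => ?_)
  obtain ⟨x₁', hx₁', hR⟩ := hExt x₂' hx₂'
  exact le_iSup₂_of_le x₁' hx₁' (hQ x₁' x₂' hR)

theorem IsAltSim.bellman_le_bellman (hAlt : IsAltSim tr₁ tr₂ R)
    {V₁ : X₁ → EReal} {V₂ : X₂ → EReal} (hV : ∀ x₁ x₂, R x₁ x₂ → V₂ x₂ ≤ V₁ x₁)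
    {x₁ : X₁} {x₂ : X₂} (hR : R x₁ x₂)
    (hcost : ∀ u₁ u₂, ExtRel tr₁ tr₂ R x₁ x₂ u₁ u₂ → c₂ x₂ u₂ ≤ c₁ x₁ u₁) :
    bellman tr₂ c₂ V₂ x₂ ≤ bellman tr₁ c₁ V₁ x₁ := by
  refine le_iInf fun u₁ => ?_
  obtain ⟨u₂, hExt⟩ := hAlt x₁ x₂ hR u₁
  refine iInf_le_of_le u₂ (hExt.QcV_cons_le_QcV_cons (hcost u₁ u₂ hExt) fun x₁' x₂' hR' => ?_)
  simpa only [QcV] using hV x₁' x₂' hR'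

theorem lyapunov_of_altSim_general (hAlt : IsAltSim tr₁ tr₂ R)
    (hcost : ∀ x₁ x₂ u₁ u₂, R x₁ x₂ → ExtRel tr₁ tr₂ R x₁ x₂ u₁ u₂ → c₂ x₂ u₂ ≤ c₁ x₁ u₁)
    {Xf : Set X₁} {L₁ : X₁ → EReal} (hL₁ : IsLyapunov tr₁ c₁ Xf L₁)
    (hbot : ∀ x₂, (∃ x₁ ∈ Xf, R x₁ x₂) → (⨅ (x₁) (_ : R x₁ x₂), L₁ x₁) ≠ ⊥) :
    IsLyapunov tr₂ c₂ {x₂ | ∃ x₁ ∈ Xf, R x₁ x₂} (fun x₂ => ⨅ (x₁) (_ : R x₁ x₂), L₁ x₁) := by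
  refine ⟨fun x₂ hx₂ => ?_, fun x₂ hx₂ => ⟨⟨?_, hbot x₂ hx₂⟩, ?_⟩⟩
  · exact iInf₂_eq_top.2 fun x₁ hR => hL₁.1 x₁ fun hx₁ => hx₂ ⟨x₁, hx₁, hR⟩
  · obtain ⟨x₁, hx₁, hR⟩ := hx₂
    exact ne_top_of_le_ne_top (hL₁.2 x₁ hx₁).1.1 (iInf₂_le x₁ hR)
  · refine le_iInf₂ fun x₁ hR => ?_
    calc bellman tr₂ c₂ (fun y₂ => ⨅ (y₁) (_ : R y₁ y₂), L₁ y₁) x₂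
      _ ≤ bellman tr₁ c₁ L₁ x₁ :=
        hAlt.bellman_le_bellman (fun y₁ _ hy => iInf₂_le y₁ hy) hR (hcost x₁ x₂ · · hR)
      _ ≤ L₁ x₁ := hL₁.bellman_le x₁

end Simulation

/-- If `R` is an alternating simulation relation relating each `x₂` to exactly one
`x₁ = g x₂`, the costs satisfy `c₁(x₁, u₁) ≥ c₂(x₂, u₂)` on `R^e`, and `L₁` is a Lyapunov
function for `S₁` with cost `c₁` in `X_f`, then `L₂ = L₁ ∘ g` is a Lyapunov function for
`S₂` with cost `c₂` in `{x₂ | g x₂ ∈ X_f}`. -/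
theorem lyapunov_of_altSim {X₁ U₁ X₂ U₂ : Type*}
    (tr₁ : X₁ → U₁ → X₁ → Prop) (tr₂ : X₂ → U₂ → X₂ → Prop)
    (c₁ : X₁ → U₁ → ℝ) (c₂ : X₂ → U₂ → ℝ)
    (R : X₁ → X₂ → Prop) (g : X₂ → X₁)
    (hAlt : IsAltSim tr₁ tr₂ R)
    (hfun : ∀ x₁ x₂, R x₁ x₂ ↔ x₁ = g x₂)
    (hcost : ∀ x₁ x₂ u₁ u₂, ExtRel tr₁ tr₂ R x₁ x₂ u₁ u₂ → c₂ x₂ u₂ ≤ c₁ x₁ u₁)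
    (Xf : Set X₁) (L₁ : X₁ → EReal) (hL₁ : IsLyapunov tr₁ c₁ Xf L₁) :
    IsLyapunov tr₂ c₂ {x₂ | g x₂ ∈ Xf} (fun x₂ => L₁ (g x₂)) := by
  simpa [hfun] using lyapunov_of_altSim_general hAlt (fun x₁ x₂ u₁ u₂ _ => hcost x₁ x₂ u₁ u₂) hL₁
    (by simpa [hfun] using fun x₂ hx₂ => (hL₁.2 (g x₂) hx₂).1.2)
end
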